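/- Let c, d > 0 with 0 < c/d ≤ 5/6 and let δ₃ = (√(c/d) − 1)/2 < 0. Then for all x ∈ (0,1) and all δ ∈ (−1/2, δ₃], F(−1/2, 1/2; 1; 1−x^c) + C₅(δ)(1−x^c) < F(−1/2−δ, 1/2+δ; 1; 1−x^d) < F(−1/2, 1/2; 1; 1−x^c) + C₆(δ)(1−x^c), where C₅(δ) = −(d/c)·(δ² + δ + (1/4)(1 − c/d)) ≥ 0 and C₆(δ) = (2/π)·[cos(πδ)/(1+2δ) − 1]. -/

import Mathlib

open Real Set Filter Topology

/-- The Gaussian hypergeometric function `F(a,b;c;x)`, defined as a power series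
with Pochhammer (shifted factorial) coefficients. -/
noncomputable def hyp (a b c x : ℝ) : ℝ :=
  ∑' n : ℕ, ((∏ i ∈ Finset.range n, (a + i)) * (∏ i ∈ Finset.range n, (b + i)) /
    ((∏ i ∈ Finset.range n, (c + i)) * (Nat.factorial n))) * x ^ n

/-- The partial products `∏_{k ≤ n} (1 - a² / k²)` of Euler's sine product. -/
noncomputable def eulerProd (a : ℝ) (n : ℕ) : ℝ :=
  ∏ i ∈ Finset.range n, (1 - a ^ 2 / ((i : ℝ) + 1) ^ 2)

/-- The Taylor coefficients of `F(-a, a; 1; x)`. -/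
noncomputable def hypCoeff (a : ℝ) : ℕ → ℝ
  | 0 => 1
  | n + 1 => -a ^ 2 * eulerProd a n / ((n : ℝ) + 1) ^ 2

/-- `F(1 - a, 1 + a; 2; x)`, which is `-1 / a²` times the derivative of `F(-a, a; 1; x)`. -/
noncomputable def hypTwo (a x : ℝ) : ℝ :=
  ∑' n : ℕ, eulerProd a n / ((n : ℝ) + 1) * x ^ n

/-- `F(1 - a, 1 + a; 3; x)`. -/
noncomputable def hypThree (a x : ℝ) : ℝ :=
  ∑' n : ℕ, 2 * eulerProd a n / (((n : ℝ) + 1) * ((n : ℝ) + 2)) * x ^ n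

lemma eulerProd_zero (a : ℝ) : eulerProd a 0 = 1 := by simp [eulerProd]

lemma eulerProd_succ (a : ℝ) (n : ℕ) :
    eulerProd a (n + 1) = eulerProd a n * (1 - a ^ 2 / ((n : ℝ) + 1) ^ 2) :=
  Finset.prod_range_succ _ _

lemma eulerProd_factor_mem {a : ℝ} (ha : a ^ 2 ≤ 1) (n : ℕ) :
    1 - a ^ 2 / ((n : ℝ) + 1) ^ 2 ∈ Icc (0 : ℝ) 1 := by
  have h1 : a ^ 2 / ((n : ℝ) + 1) ^ 2 ≤ 1 := by
    rw [div_le_one (by positivity)]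
    nlinarith [Nat.cast_nonneg (α := ℝ) n]
  have h2 : 0 ≤ a ^ 2 / ((n : ℝ) + 1) ^ 2 := by positivity
  constructor <;> linarith

lemma eulerProd_nonneg {a : ℝ} (ha : a ^ 2 ≤ 1) (n : ℕ) : 0 ≤ eulerProd a n :=
  Finset.prod_nonneg fun i _ => (eulerProd_factor_mem ha i).1

lemma eulerProd_le_one {a : ℝ} (ha : a ^ 2 ≤ 1) (n : ℕ) : eulerProd a n ≤ 1 :=
  Finset.prod_le_one (fun i _ => (eulerProd_factor_mem ha i).1)
    fun i _ => (eulerProd_factor_mem ha i).2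

lemma sum_hypCoeff (a : ℝ) (n : ℕ) :
    ∑ i ∈ Finset.range (n + 1), hypCoeff a i = eulerProd a n := by
  induction n with
  | zero => simp [hypCoeff, eulerProd_zero]
  | succ n ih =>
    rw [Finset.sum_range_succ, ih, eulerProd_succ, hypCoeff]
    ring

lemma hyp_coeff_eq (a : ℝ) (n : ℕ) :
    (∏ i ∈ Finset.range n, (-a + i)) * (∏ i ∈ Finset.range n, (a + i)) /
      ((∏ i ∈ Finset.range n, ((1 : ℝ) + i)) * (Nat.factorial n)) = hypCoeff a n := by
  rcases n with _ | n
  · simp [hypCoeff]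
  induction n with
  | zero => simp [hypCoeff, eulerProd_zero]; ring
  | succ n ih =>
    rw [Finset.prod_range_succ, Finset.prod_range_succ (fun i : ℕ => a + (i : ℝ)),
      Finset.prod_range_succ (fun i : ℕ => (1 : ℝ) + i), Nat.factorial_succ]
    rw [hypCoeff] at ih ⊢
    rw [eulerProd_succ]
    set A := ∏ i ∈ Finset.range (n + 1), (-a + (i : ℝ))
    set B := ∏ i ∈ Finset.range (n + 1), (a + (i : ℝ))
    set C := ∏ i ∈ Finset.range (n + 1), ((1 : ℝ) + i)
    have key : A * (-a + ((n + 1 : ℕ) : ℝ)) * (B * (a + ((n + 1 : ℕ) : ℝ))) /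
        (C * (1 + ((n + 1 : ℕ) : ℝ)) * (((n + 1 + 1) * (n + 1).factorial : ℕ) : ℝ)) =
        A * B / (C * ((n + 1).factorial : ℝ)) *
          ((((n : ℝ) + 1) ^ 2 - a ^ 2) / ((n : ℝ) + 2) ^ 2) := by
      rw [div_mul_div_comm]
      push_cast
      congr 1 <;> ring
    rw [key, ih]
    push_cast
    have h1 : (n : ℝ) + 1 ≠ 0 := by positivity
    have h2 : (n : ℝ) + 2 ≠ 0 := by positivity
    have h3 : (n : ℝ) + 1 + 1 ≠ 0 := by positivity
    field_simp
    ring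

lemma hyp_eq_tsum (a x : ℝ) : hyp (-a) a 1 x = ∑' n : ℕ, hypCoeff a n * x ^ n := by
  simp only [hyp, hyp_coeff_eq]

lemma abs_hypCoeff_le {a : ℝ} (ha : a ^ 2 ≤ 1) (n : ℕ) :
    |hypCoeff a (n + 1)| ≤ 1 / ((n : ℝ) + 1) ^ 2 := by
  have h0 := eulerProd_nonneg ha n
  have h1 := eulerProd_le_one ha n
  rw [hypCoeff, abs_div, abs_of_pos (a := ((n : ℝ) + 1) ^ 2) (by positivity)]
  gcongr
  rw [abs_le]
  constructor <;> nlinarith [sq_nonneg a]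

lemma abs_hypCoeff_le_one {a : ℝ} (ha : a ^ 2 ≤ 1) (n : ℕ) : |hypCoeff a n| ≤ 1 := by
  rcases n with _ | n
  · simp [hypCoeff]
  · refine (abs_hypCoeff_le ha n).trans ?_
    rw [div_le_one (by positivity)]
    nlinarith [Nat.cast_nonneg (α := ℝ) n]

lemma summable_abs_hypCoeff {a : ℝ} (ha : a ^ 2 ≤ 1) : Summable fun n => |hypCoeff a n| := by
  rw [← summable_nat_add_iff 1]
  refine Summable.of_nonneg_of_le (fun _ => abs_nonneg _) (abs_hypCoeff_le ha) ?_
  have h := (summable_nat_add_iff 1).2 (Real.summable_one_div_nat_pow.2 one_lt_two)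
  simpa using h

lemma continuousOn_hyp {a : ℝ} (ha : a ^ 2 ≤ 1) :
    ContinuousOn (fun x => hyp (-a) a 1 x) (Icc 0 1) := by
  simp only [hyp_eq_tsum]
  refine continuousOn_tsum (fun n => by fun_prop) (summable_abs_hypCoeff ha) ?_
  intro n x hx
  rw [norm_mul, norm_pow, Real.norm_eq_abs, Real.norm_eq_abs, abs_of_nonneg hx.1]
  exact mul_le_of_le_one_right (abs_nonneg _) (pow_le_one₀ hx.1 hx.2)

lemma hyp_zero (a : ℝ) : hyp (-a) a 1 0 = 1 := by
  rw [hyp_eq_tsum, tsum_eq_single 0]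
  · simp [hypCoeff]
  · intro n hn
    simp [hn]

/-- Gauss's summation formula for `F(-a, a; 1; 1)`. -/
lemma hyp_one {a : ℝ} (ha0 : a ≠ 0) (ha : a ^ 2 ≤ 1) :
    hyp (-a) a 1 1 = sin (π * a) / (π * a) := by
  have h1 : Tendsto (eulerProd a) atTop (𝓝 (hyp (-a) a 1 1)) := by
    have h := (summable_abs_hypCoeff ha).of_abs.hasSum.tendsto_sum_nat
    have h' := (tendsto_add_atTop_iff_nat 1).2 h
    simpa only [sum_hypCoeff, hyp_eq_tsum, one_pow, mul_one] using h'
  have h2 := (Real.tendsto_euler_sin_prod a).div_const (π * a)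
  refine tendsto_nhds_unique h1 (h2.congr fun n => ?_)
  exact mul_div_cancel_left₀ _ (mul_ne_zero pi_ne_zero ha0)

lemma hasDerivAt_tsum_mul_pow {b : ℕ → ℝ} {C : ℝ} (hb : ∀ n, |b n| ≤ C) {x : ℝ} (hx : |x| < 1) :
    HasDerivAt (fun z => ∑' n : ℕ, b n * z ^ n) (∑' n : ℕ, ((n : ℝ) + 1) * b (n + 1) * x ^ n) x := by
  obtain ⟨r, hxr, hr⟩ := exists_between hx
  have hr0 : 0 < r := (abs_nonneg x).trans_lt hxr
  have hu : Summable fun n : ℕ => C * ((n : ℝ) * r ^ (n - 1)) := by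
    refine Summable.mul_left C ?_
    rw [← summable_nat_add_iff 1]
    have h1 := summable_pow_mul_geometric_of_norm_lt_one 1 (r := r)
      (by rwa [Real.norm_eq_abs, abs_of_pos hr0])
    have h0 := summable_geometric_of_lt_one hr0.le hr
    refine (h1.add h0).congr fun n => ?_
    simp; ring
  have hmem : x ∈ Metric.ball (0 : ℝ) r := by simpa using hxr
  have hbd : ∀ (n : ℕ) (y : ℝ), y ∈ Metric.ball (0 : ℝ) r →
      ‖b n * ((n : ℝ) * y ^ (n - 1))‖ ≤ C * ((n : ℝ) * r ^ (n - 1)) := by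
    intro n y hy
    have hy' : |y| ≤ r := by simpa using (Metric.mem_ball.1 hy).le
    rw [norm_mul, norm_mul, norm_pow, Real.norm_eq_abs, Real.norm_eq_abs, Real.norm_eq_abs,
      Nat.abs_cast]
    gcongr
    · exact (abs_nonneg _).trans (hb n)
    · exact hb n
  have hd := hasDerivAt_tsum_of_isPreconnected (g := fun n z => b n * z ^ n)
    (g' := fun n z => b n * ((n : ℝ) * z ^ (n - 1))) hu
    Metric.isOpen_ball (convex_ball (0 : ℝ) r).isPreconnected
    (fun n y _ => (hasDerivAt_pow n y).const_mul (b n)) hbd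
    (Metric.mem_ball_self hr0) (summable_of_ne_finset_zero (s := {0}) (by
      intro n hn
      have : n ≠ 0 := by simpa using hn
      simp [this])) hmem
  refine hd.congr_deriv ?_
  have hs : Summable fun n : ℕ => b n * ((n : ℝ) * x ^ (n - 1)) :=
    Summable.of_norm_bounded hu fun n => hbd n x hmem
  rw [hs.tsum_eq_zero_add]
  simp only [Nat.cast_zero, zero_mul, mul_zero, zero_add, Nat.cast_add, Nat.cast_one,
    Nat.add_sub_cancel]
  exact tsum_congr fun n => by ring

lemma hasDerivAt_hyp {a : ℝ} (ha : a ^ 2 ≤ 1) {x : ℝ} (hx : |x| < 1) :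
    HasDerivAt (fun z => hyp (-a) a 1 z) (-a ^ 2 * hypTwo a x) x := by
  simp only [hyp_eq_tsum]
  convert hasDerivAt_tsum_mul_pow (abs_hypCoeff_le_one ha) hx using 1
  rw [hypTwo, ← tsum_mul_left]
  refine tsum_congr fun n => ?_
  rw [hypCoeff]
  field_simp

lemma summable_mul_pow {b : ℕ → ℝ} {C : ℝ} (hb : ∀ n, |b n| ≤ C) {x : ℝ} (hx : |x| < 1) :
    Summable fun n => b n * x ^ n := by
  refine Summable.of_norm_bounded ((summable_geometric_of_lt_one (abs_nonneg x) hx).mul_left C) ?_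
  intro n
  rw [norm_mul, norm_pow, Real.norm_eq_abs, Real.norm_eq_abs]
  gcongr
  exact hb n

lemma abs_hypTwo_coeff_le {a : ℝ} (ha : a ^ 2 ≤ 1) (n : ℕ) :
    |eulerProd a n / ((n : ℝ) + 1)| ≤ 1 := by
  have h0 := eulerProd_nonneg ha n
  rw [abs_of_nonneg (by positivity), div_le_one (by positivity)]
  linarith [eulerProd_le_one ha n, Nat.cast_nonneg (α := ℝ) n]

lemma abs_hypThree_coeff_le {a : ℝ} (ha : a ^ 2 ≤ 1) (n : ℕ) :
    |2 * eulerProd a n / (((n : ℝ) + 1) * ((n : ℝ) + 2))| ≤ 1 := by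
  have h0 := eulerProd_nonneg ha n
  rw [abs_of_nonneg (by positivity), div_le_one (by positivity)]
  nlinarith [eulerProd_le_one ha n, Nat.cast_nonneg (α := ℝ) n]

lemma hasDerivAt_hypTwo {a : ℝ} (ha : a ^ 2 ≤ 1) {x : ℝ} (hx : |x| < 1) :
    HasDerivAt (hypTwo a) ((1 - a ^ 2) / 2 * hypThree a x / (1 - x)) x := by
  have hd := hasDerivAt_tsum_mul_pow (abs_hypTwo_coeff_le ha) hx
  refine hd.congr_deriv (Eq.symm ?_)
  have hx1 : 1 - x ≠ 0 := by linarith [(abs_lt.1 hx).2]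
  rw [div_eq_iff hx1, hypThree, ← tsum_mul_left, mul_sub, mul_one, ← tsum_mul_right]
  have hs : Summable fun n : ℕ => (n : ℝ) * (eulerProd a n / ((n : ℝ) + 1)) * x ^ n := by
    refine summable_mul_pow (C := 1) (fun n => ?_) hx
    have h0 := eulerProd_nonneg ha n
    rw [abs_of_nonneg (by positivity), ← mul_div_assoc, div_le_one (by positivity)]
    nlinarith [eulerProd_le_one ha n, Nat.cast_nonneg (α := ℝ) n]
  have hshift : ∑' n : ℕ, ((n : ℝ) + 1) * (eulerProd a (n + 1) / (((n + 1 : ℕ) : ℝ) + 1)) * x ^ n * x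
      = ∑' n : ℕ, (n : ℝ) * (eulerProd a n / ((n : ℝ) + 1)) * x ^ n := by
    rw [hs.tsum_eq_zero_add]
    simp only [Nat.cast_zero, zero_mul, zero_add]
    refine tsum_congr fun n => ?_
    push_cast
    ring
  have hs1 : Summable fun n : ℕ =>
      ((n : ℝ) + 1) * (eulerProd a (n + 1) / (((n + 1 : ℕ) : ℝ) + 1)) * x ^ n := by
    refine summable_mul_pow (C := 1) (fun n => ?_) hx
    have h0 := eulerProd_nonneg ha (n + 1)
    rw [abs_of_nonneg (by positivity), ← mul_div_assoc, div_le_one (by positivity)]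
    push_cast
    nlinarith [eulerProd_le_one ha (n + 1), Nat.cast_nonneg (α := ℝ) n]
  rw [hshift, ← hs1.tsum_sub hs]
  refine tsum_congr fun n => ?_
  rw [eulerProd_succ]
  push_cast
  have h1 : (n : ℝ) + 1 ≠ 0 := by positivity
  have h2 : (n : ℝ) + 2 ≠ 0 := by positivity
  have h3 : (n : ℝ) + 1 + 1 ≠ 0 := by positivity
  field_simp
  ring

lemma hypTwo_zero (a : ℝ) : hypTwo a 0 = 1 := by
  rw [hypTwo, tsum_eq_single 0]
  · simp [eulerProd_zero]
  · intro n hn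
    simp [hn]

lemma one_le_hypThree {a : ℝ} (ha : a ^ 2 ≤ 1) {x : ℝ} (hx0 : 0 ≤ x) (hx1 : x < 1) :
    1 ≤ hypThree a x := by
  have hs := summable_mul_pow (abs_hypThree_coeff_le ha) (by rwa [abs_of_nonneg hx0])
  have h := hs.le_tsum 0 fun n _ => by
    have := eulerProd_nonneg ha n
    positivity
  simpa [hypThree, eulerProd_zero] using h

lemma hypThree_le_hypTwo {a : ℝ} (ha : a ^ 2 ≤ 1) {x : ℝ} (hx0 : 0 ≤ x) (hx1 : x < 1) :
    hypThree a x ≤ hypTwo a x := by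
  have hx : |x| < 1 := by rwa [abs_of_nonneg hx0]
  refine (summable_mul_pow (abs_hypThree_coeff_le ha) hx).tsum_le_tsum (fun n => ?_)
    (summable_mul_pow (abs_hypTwo_coeff_le ha) hx)
  have h0 := eulerProd_nonneg ha n
  refine mul_le_mul_of_nonneg_right ?_ (by positivity)
  rw [div_le_div_iff₀ (by positivity) (by positivity)]
  have : 0 ≤ eulerProd a n * ((n : ℝ) + 1) * n := by positivity
  nlinarith

lemma hypThree_le {a : ℝ} (ha : a ^ 2 ≤ 1) {x : ℝ} (hx0 : 0 ≤ x) (hx1 : x < 1) :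
    hypThree a x ≤ 1 + x / 3 + 2 / 3 * x ^ 2 := by
  have hs := summable_mul_pow (abs_hypThree_coeff_le ha) (by rwa [abs_of_nonneg hx0])
  have htel : HasSum (fun n : ℕ => 2 / (((n : ℝ) + 3) * ((n : ℝ) + 4))) (2 / 3) := by
    rw [hasSum_iff_tendsto_nat_of_nonneg (fun n => by positivity)]
    have hsum : ∀ n : ℕ, ∑ i ∈ Finset.range n, 2 / (((i : ℝ) + 3) * ((i : ℝ) + 4)) =
        2 / 3 - 2 * (1 / (((n + 2 : ℕ) : ℝ) + 1)) := by
      intro n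
      induction n with
      | zero => norm_num
      | succ n ih =>
        rw [Finset.sum_range_succ, ih]
        push_cast
        have h1 : (n : ℝ) + 3 ≠ 0 := by positivity
        have h2 : (n : ℝ) + 4 ≠ 0 := by positivity
        have h3 : (n : ℝ) + 2 + 1 ≠ 0 := by positivity
        have h4 : (n : ℝ) + 1 + 2 + 1 ≠ 0 := by positivity
        field_simp
        ring
    simp only [hsum]
    have h := (tendsto_add_atTop_iff_nat 2).2 (tendsto_one_div_add_atTop_nhds_zero_nat (𝕜 := ℝ))
    simpa using (h.const_mul 2).const_sub (2 / 3)
  rw [hypThree, ← hs.sum_add_tsum_nat_add 2]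
  refine add_le_add ?_ ?_
  · rw [Finset.sum_range_succ, Finset.sum_range_one]
    have h1 := eulerProd_le_one ha 1
    norm_num [eulerProd_zero]
    nlinarith
  · rw [← htel.tsum_eq, ← tsum_mul_right]
    refine ((summable_nat_add_iff 2).2 hs).tsum_le_tsum (fun n => ?_)
      (htel.summable.mul_right (x ^ 2))
    have h0 := eulerProd_nonneg ha (n + 2)
    have h1 := eulerProd_le_one ha (n + 2)
    have hxp : x ^ (n + 2) ≤ x ^ 2 := pow_le_pow_of_le_one hx0 hx1.le (by omega)
    push_cast
    rw [show (n : ℝ) + 2 + 1 = n + 3 by ring, show (n : ℝ) + 2 + 2 = n + 4 by ring]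
    gcongr
    linarith

lemma mul_sextic_lt {r : ℝ} (hr0 : 0 ≤ r) (hr1 : r ≤ 1) :
    r * (1 + (1 - r ^ 6) / 3 + 2 / 3 * (1 - r ^ 6) ^ 2) < 15 / 11 := by
  have htan : r ≤ 3 / 4 + (r ^ 6 - 729 / 4096) * (512 / 729) := by
    have h : 0 ≤ (r - 3 / 4) ^ 2 *
        (r ^ 4 + 3 / 2 * r ^ 3 + 27 / 16 * r ^ 2 + 27 / 16 * r + 405 / 256) := by positivity
    linarith
  have ht0 : 0 ≤ r ^ 6 := by positivity
  have ht1 : r ^ 6 ≤ 1 := pow_le_one₀ hr0 hr1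
  generalize r ^ 6 = t at *
  have hpos : 0 ≤ 1 + (1 - t) / 3 + 2 / 3 * (1 - t) ^ 2 := by nlinarith
  refine (mul_le_mul_of_nonneg_right htan hpos).trans_lt ?_
  nlinarith [mul_nonneg ht0 (sub_nonneg.2 ht1), mul_nonneg ht0 (sq_nonneg (t - 1 / 3)),
    mul_nonneg (sub_nonneg.2 ht1) (sq_nonneg (t - 1 / 3))]

lemma rpow_mul_hypThree_lt {a q y : ℝ} (ha : a ^ 2 ≤ 1) (hq : 6 / 5 ≤ q) (hy0 : 0 < y)
    (hy1 : y < 1) : y ^ (q - 1) * hypThree a (1 - y ^ q) < 15 / 11 := by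
  have hyq0 : 0 < y ^ q := rpow_pos_of_pos hy0 q
  have hyq1 : y ^ q < 1 := rpow_lt_one hy0.le hy1 (by linarith)
  have hr0 : 0 < y ^ (q / 6) := rpow_pos_of_pos hy0 _
  have hr1 : y ^ (q / 6) ≤ 1 := rpow_le_one hy0.le hy1.le (by linarith)
  have hr6 : y ^ q = (y ^ (q / 6)) ^ 6 := by
    rw [← rpow_natCast, ← rpow_mul hy0.le]
    norm_num
  have hle : y ^ (q - 1) ≤ y ^ (q / 6) :=
    rpow_le_rpow_of_exponent_ge hy0 hy1.le (by linarith)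
  have h3 := hypThree_le ha (x := 1 - y ^ q) (by linarith) (by linarith)
  have h1 := one_le_hypThree ha (x := 1 - y ^ q) (by linarith) (by linarith)
  calc y ^ (q - 1) * hypThree a (1 - y ^ q)
      ≤ y ^ (q / 6) * (1 + (1 - y ^ q) / 3 + 2 / 3 * (1 - y ^ q) ^ 2) :=
        mul_le_mul hle h3 (by linarith) hr0.le
    _ < 15 / 11 := by
        rw [hr6]
        exact mul_sextic_lt hr0.le hr1

lemma second_derivative_estimate {a q y : ℝ} (hq : 6 / 5 ≤ q) (haq : a ^ 2 * q ≤ 1 / 4)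
    (hy0 : 0 < y) (hy1 : y < 1) :
    a ^ 2 * q * (y ^ (q - 1) * (q * (1 - a ^ 2) / 2 * hypThree a (1 - y ^ q) -
      (q - 1) * hypTwo a (1 - y ^ q))) < 3 / 32 * hypThree (1 / 2) (1 - y) := by
  have ha : a ^ 2 ≤ 1 := by nlinarith [sq_nonneg a]
  have hyq0 : 0 < y ^ q := rpow_pos_of_pos hy0 q
  have hyq1 : y ^ q < 1 := rpow_lt_one hy0.le hy1 (by linarith)
  have hY0 : 0 < y ^ (q - 1) := rpow_pos_of_pos hy0 _
  have hM := rpow_mul_hypThree_lt ha hq hy0 hy1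
  have hPQ := hypThree_le_hypTwo ha (x := 1 - y ^ q) (by linarith) (by linarith)
  have hQ1 := one_le_hypThree ha (x := 1 - y ^ q) (by linarith) (by linarith)
  have hR := one_le_hypThree (a := 1 / 2) (by norm_num) (x := 1 - y) (by linarith) (by linarith)
  have hs0 : 0 ≤ a ^ 2 * q := by positivity
  have hM0 : 0 < y ^ (q - 1) * hypThree a (1 - y ^ q) := by positivity
  calc a ^ 2 * q * (y ^ (q - 1) * (q * (1 - a ^ 2) / 2 * hypThree a (1 - y ^ q) -
        (q - 1) * hypTwo a (1 - y ^ q)))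
      ≤ a ^ 2 * q * (y ^ (q - 1) * (q * (1 - a ^ 2) / 2 * hypThree a (1 - y ^ q) -
        (q - 1) * hypThree a (1 - y ^ q))) := by
        have : 0 ≤ q - 1 := by linarith
        gcongr
    _ = a ^ 2 * q * (1 - q / 2 - a ^ 2 * q / 2) * (y ^ (q - 1) * hypThree a (1 - y ^ q)) := by ring
    _ ≤ 11 / 160 * (y ^ (q - 1) * hypThree a (1 - y ^ q)) := by
        refine mul_le_mul_of_nonneg_right ?_ hM0.le
        nlinarith
    _ < 3 / 32 * hypThree (1 / 2) (1 - y) := by linarith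

/-- The difference of the two hypergeometric functions, in the variable `u = 1 - x ^ c`. -/
noncomputable def hypDiff (a q u : ℝ) : ℝ :=
  hyp (-a) a 1 (1 - (1 - u) ^ q) - hyp (-(1 / 2)) (1 / 2) 1 u

/-- The derivative of `hypDiff`. -/
noncomputable def hypDiffDeriv (a q u : ℝ) : ℝ :=
  1 / 4 * hypTwo (1 / 2) u - a ^ 2 * q * ((1 - u) ^ (q - 1) * hypTwo a (1 - (1 - u) ^ q))

lemma abs_one_sub_rpow_lt {q u : ℝ} (hq : 0 < q) (hu : u ∈ Ico (0 : ℝ) 1) :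
    |1 - (1 - u) ^ q| < 1 := by
  have h0 : 0 < (1 - u) ^ q := rpow_pos_of_pos (by linarith [hu.2]) q
  have h1 : (1 - u) ^ q ≤ 1 := rpow_le_one (by linarith [hu.2]) (by linarith [hu.1]) hq.le
  rw [abs_lt]
  constructor <;> linarith

lemma hasDerivAt_one_sub_rpow (q : ℝ) {u : ℝ} (hu : u < 1) :
    HasDerivAt (fun v : ℝ => (1 - v) ^ q) (-(q * (1 - u) ^ (q - 1))) u := by
  have h := ((hasDerivAt_id u).const_sub 1).rpow_const (p := q) (Or.inl (by simp; linarith))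
  refine h.congr_deriv ?_
  simp

lemma hasDerivAt_hypDiff {a q u : ℝ} (ha : a ^ 2 ≤ 1) (hq : 0 < q) (hu : u ∈ Ico (0 : ℝ) 1) :
    HasDerivAt (hypDiff a q) (hypDiffDeriv a q u) u := by
  have hz := (hasDerivAt_one_sub_rpow q hu.2).const_sub 1
  have h1 := (hasDerivAt_hyp ha (abs_one_sub_rpow_lt hq hu)).comp u hz
  have h2 := hasDerivAt_hyp (a := 1 / 2) (by norm_num) (x := u)
    (by rw [abs_of_nonneg hu.1]; exact hu.2)
  refine (h1.sub h2).congr_deriv ?_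
  rw [hypDiffDeriv]
  ring

lemma hasDerivAt_hypDiffDeriv {a q u : ℝ} (ha : a ^ 2 ≤ 1) (hq : 0 < q)
    (hu : u ∈ Ico (0 : ℝ) 1) :
    HasDerivAt (hypDiffDeriv a q)
      ((3 / 32 * hypThree (1 / 2) u - a ^ 2 * q * ((1 - u) ^ (q - 1) *
        (q * (1 - a ^ 2) / 2 * hypThree a (1 - (1 - u) ^ q) -
          (q - 1) * hypTwo a (1 - (1 - u) ^ q)))) / (1 - u)) u := by
  have hz := (hasDerivAt_one_sub_rpow q hu.2).const_sub 1
  have h1 := (hasDerivAt_hypTwo ha (abs_one_sub_rpow_lt hq hu)).comp u hz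
  have h2 := hasDerivAt_hypTwo (a := 1 / 2) (by norm_num) (x := u)
    (by rw [abs_of_nonneg hu.1]; exact hu.2)
  have h3 := ((hasDerivAt_one_sub_rpow (q - 1) hu.2).mul h1).const_mul (a ^ 2 * q)
  refine ((h2.const_mul (1 / 4)).sub h3).congr_deriv ?_
  have hy : 0 < 1 - u := by linarith [hu.2]
  have hY : 0 < (1 - u) ^ (q - 1) := rpow_pos_of_pos hy _
  have hyq : (1 - u) ^ q = (1 - u) ^ (q - 1) * (1 - u) := by
    rw [rpow_sub_one hy.ne', div_mul_cancel₀ _ hy.ne']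
  simp only [Function.comp_apply, sub_sub_cancel]
  rw [rpow_sub_one hy.ne' (q - 1)]
  generalize hypTwo a (1 - (1 - u) ^ q) = P
  generalize hypThree a (1 - (1 - u) ^ q) = Q
  rw [hyq]
  field_simp
  ring

lemma strictConvexOn_hypDiff {a q : ℝ} (hq : 6 / 5 ≤ q) (haq : a ^ 2 * q ≤ 1 / 4) :
    StrictConvexOn ℝ (Icc 0 1) (hypDiff a q) := by
  have ha : a ^ 2 ≤ 1 := by nlinarith [sq_nonneg a]
  have hq0 : 0 < q := by linarith
  have hcont : ContinuousOn (hypDiff a q) (Icc 0 1) := by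
    refine ContinuousOn.sub ((continuousOn_hyp ha).comp (f := fun u : ℝ => 1 - (1 - u) ^ q) ?_ ?_)
      (continuousOn_hyp (by norm_num))
    · exact (continuous_const.sub ((continuous_const.sub continuous_id).rpow_const
        fun _ => Or.inr hq0.le)).continuousOn
    · intro u hu
      have h0 : 0 ≤ (1 - u) ^ q := rpow_nonneg (by linarith [hu.2]) q
      have h1 : (1 - u) ^ q ≤ 1 := rpow_le_one (by linarith [hu.2]) (by linarith [hu.1]) hq0.le
      constructor <;> linarith
  refine StrictMonoOn.strictConvexOn_of_deriv (convex_Icc 0 1) hcont ?_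
  rw [interior_Icc]
  have hmono : StrictMonoOn (hypDiffDeriv a q) (Ioo 0 1) := by
    refine strictMonoOn_of_deriv_pos (convex_Ioo 0 1) (fun u hu =>
      (hasDerivAt_hypDiffDeriv ha hq0 ⟨hu.1.le, hu.2⟩).continuousAt.continuousWithinAt) ?_
    intro u hu
    rw [interior_Ioo] at hu
    rw [(hasDerivAt_hypDiffDeriv ha hq0 ⟨hu.1.le, hu.2⟩).deriv]
    have h := second_derivative_estimate hq haq (y := 1 - u) (by linarith [hu.2])
      (by linarith [hu.1])
    rw [sub_sub_cancel 1 u] at h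
    exact div_pos (sub_pos.2 h) (by linarith [hu.2])
  exact hmono.congr fun u hu => (hasDerivAt_hypDiff ha hq0 ⟨hu.1.le, hu.2⟩).deriv.symm

theorem stmt16 (c d δ₃ : ℝ)
    (hc : 0 < c) (hd : 0 < d) (hcd : c / d ≤ 5 / 6)
    (hδ₃ : δ₃ = (Real.sqrt (c / d) - 1) / 2) :
    δ₃ < 0 ∧
      ∀ x ∈ Ioo (0:ℝ) 1, ∀ δ ∈ Ioc (-(1/2) : ℝ) δ₃,
        0 ≤ -(d / c) * (δ ^ 2 + δ + (1/4) * (1 - c / d)) ∧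
        hyp (-(1/2)) (1/2) 1 (1 - x ^ c) +
            (-(d / c) * (δ ^ 2 + δ + (1/4) * (1 - c / d))) * (1 - x ^ c)
          < hyp (-(1/2) - δ) (1/2 + δ) 1 (1 - x ^ d) ∧
        hyp (-(1/2) - δ) (1/2 + δ) 1 (1 - x ^ d)
          < hyp (-(1/2)) (1/2) 1 (1 - x ^ c) +
              ((2 / π) * (Real.cos (π * δ) / (1 + 2 * δ) - 1)) * (1 - x ^ c) := by
  have hκ0 : 0 < c / d := div_pos hc hd
  have hsqrt : Real.sqrt (c / d) < 1 := by
    rw [Real.sqrt_lt' one_pos]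
    linarith
  refine ⟨by linarith, ?_⟩
  rintro x ⟨hx0, hx1⟩ δ ⟨hδ0, hδ1⟩
  obtain ⟨a, rfl⟩ : ∃ a, δ = a - 1 / 2 := ⟨δ + 1 / 2, by ring⟩
  have ha0 : 0 < a := by linarith
  have hasqrt : 2 * a ≤ Real.sqrt (c / d) := by linarith
  have haκ : 4 * a ^ 2 ≤ c / d := by
    have h := Real.sq_sqrt hκ0.le
    nlinarith
  set q := d / c with hq
  have hq0 : 0 < q := div_pos hd hc
  have hqκ : c / d = 1 / q := by rw [hq, one_div_div]
  rw [hqκ] at haκ hcd ⊢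
  have hq1 : 6 / 5 ≤ q := by
    rw [div_le_iff₀ hq0] at hcd
    linarith
  have haq : a ^ 2 * q ≤ 1 / 4 := by
    rw [le_div_iff₀ hq0] at haκ
    linarith
  have ha1 : a ^ 2 ≤ 1 := by nlinarith [sq_nonneg a]
  have hC5 : -q * ((a - 1 / 2) ^ 2 + (a - 1 / 2) + 1 / 4 * (1 - 1 / q)) = 1 / 4 - a ^ 2 * q := by
    field_simp
    ring
  have hC6 : 2 / π * (Real.cos (π * (a - 1 / 2)) / (1 + 2 * (a - 1 / 2)) - 1) =
      hypDiff a q 1 := by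
    have hcos : Real.cos (π * (a - 1 / 2)) = Real.sin (π * a) := by
      rw [← Real.cos_sub_pi_div_two]
      congr 1
      ring
    have hsin : Real.sin (π * (1 / 2)) = 1 := by
      rw [mul_one_div, Real.sin_pi_div_two]
    rw [hypDiff, sub_self, zero_rpow hq0.ne', sub_zero, hyp_one ha0.ne' ha1,
      hyp_one (by norm_num) (by norm_num), hcos, hsin]
    have hden : 1 + 2 * (a - 1 / 2) = 2 * a := by ring
    rw [hden]
    field_simp
  have hzero : hypDiff a q 0 = 0 := by
    rw [hypDiff, sub_zero, one_rpow, sub_self, hyp_zero, hyp_zero, sub_self]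
  have hslope : HasDerivAt (hypDiff a q) (1 / 4 - a ^ 2 * q) 0 := by
    have h := hasDerivAt_hypDiff ha1 hq0 (u := 0) ⟨le_rfl, one_pos⟩
    rwa [hypDiffDeriv, sub_zero, one_rpow, one_rpow, sub_self, hypTwo_zero, hypTwo_zero,
      one_mul, mul_one, mul_one] at h
  have hy0 : 0 < x ^ c := rpow_pos_of_pos hx0 c
  have hy1 : x ^ c < 1 := rpow_lt_one hx0.le hx1 hc
  have hval : hypDiff a q (1 - x ^ c) =
      hyp (-(1 / 2) - (a - 1 / 2)) (1 / 2 + (a - 1 / 2)) 1 (1 - x ^ d) -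
        hyp (-(1 / 2)) (1 / 2) 1 (1 - x ^ c) := by
    have hxd : (x ^ c) ^ q = x ^ d := by
      rw [← rpow_mul hx0.le, hq, mul_div_cancel₀ _ hc.ne']
    rw [hypDiff, sub_sub_cancel, hxd]
    congr 2 <;> ring
  have hconv := strictConvexOn_hypDiff hq1 haq
  have hmem0 : (0 : ℝ) ∈ Icc (0 : ℝ) 1 := ⟨le_rfl, zero_le_one⟩
  have hmem1 : (1 : ℝ) ∈ Icc (0 : ℝ) 1 := ⟨zero_le_one, le_rfl⟩
  rw [hC5, hC6]
  refine ⟨by linarith, ?_, ?_⟩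
  · have h := hconv.lt_slope_of_hasDerivAt hmem0
      (show 1 - x ^ c ∈ Icc (0 : ℝ) 1 from ⟨by linarith, by linarith⟩) (by linarith) hslope
    rw [slope_def_field, hzero, sub_zero, sub_zero, lt_div_iff₀ (by linarith)] at h
    linarith
  · have h := hconv.2 hmem0 hmem1 zero_ne_one hy0 (sub_pos.2 hy1) (by ring)
    simp only [smul_eq_mul, mul_zero, mul_one, zero_add, hzero] at h
    linarith
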